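/- arXiv:1109.0719 — 2 statements merged into one kernel-verified Lean document; each statement's English description precedes it below -/
import Mathlib

section
/- (Lemma 3.3.) Let k, l be integers with k ≤ l < 2k and k ≥ 1. Let G = (V, E) be a multigraph, V_H ⊆ V with distinct A, B ∈ V_H, and suppose the induced subgraph H = (V_H, E_H) satisfies the renormalizability condition with respect to A, B. Let g̃ = (ṽ, ẽ) be a subgraph of R(G), and let m̃ be the number of edges of its renormalized part (its A–B edges coming from the renormalization). Then there exists a subgraph g of G such that: (i) R(g) = g̃; (ii) if A ∉ ṽ or B ∉ ṽ, then the intersection h = (V_h, E_h) of g with H has no edges; (iii) if A ∈ ṽ and B ∈ ṽ, then h = (V_h, E_h) is (k,l)-sparse and m̃ = |E_h| − k|V_h| + 2k. -/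
/-!  Multigraphs: finite vertex set, finite multiset of edges (unordered pairs of
distinct vertices, parallel edges allowed, loops excluded). -/

/-- A multigraph on vertex type `V`: a finite set of vertices together with a
finite multiset of edges (unordered pairs of vertices). -/
structure MG (V : Type*) where
  verts : Finset V
  edges : Multiset (Sym2 V)

namespace MG

variable {V : Type*} [DecidableEq V]

/-- Well-formedness: no loops, and every edge joins vertices of the graph. -/
def WF (G : MG V) : Prop :=
  (∀ e ∈ G.edges, ¬ e.IsDiag) ∧ (∀ e ∈ G.edges, e ∈ G.verts.sym2)

/-- `G'` is a subgraph of `G`: vertices a subset, edges a sub-multiset, and all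
edges of `G'` join vertices of `G'`. -/
def IsSubgraph (G' G : MG V) : Prop :=
  G'.verts ⊆ G.verts ∧ G'.edges ≤ G.edges ∧ ∀ e ∈ G'.edges, e ∈ G'.verts.sym2

/-- `(k,l)`-sparsity: every subgraph with `n > 1` vertices and `m` edges
satisfies `m ≤ k n - l`. -/
def Sparse (k l : ℤ) (G : MG V) : Prop :=
  ∀ G' : MG V, G'.IsSubgraph G → 1 < G'.verts.card →
    (Multiset.card G'.edges : ℤ) ≤ k * G'.verts.card - l

/-- `(k,l)`-redundant: not `(k,l)`-sparse. -/
def Redundant (k l : ℤ) (G : MG V) : Prop := ¬ Sparse k l G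

/-- `(k,l)`-tight: sparse with exactly `k|V| - l` edges. -/
def Tight (k l : ℤ) (G : MG V) : Prop :=
  Sparse k l G ∧ (Multiset.card G.edges : ℤ) = k * G.verts.card - l

/-- `A` and `B` are `(k,l)`-rigidly connected in `G` if some `(k,l)`-tight
subgraph of `G` contains both. -/
def RigidlyConnected (k l : ℤ) (G : MG V) (A B : V) : Prop :=
  ∃ T : MG V, T.IsSubgraph G ∧ Tight k l T ∧ A ∈ T.verts ∧ B ∈ T.verts

/-- `r_AB(H)`: the maximum of `|E_h| - k |V_h|` over all `(k,l)`-sparse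
subgraphs `h` of `H` containing both `A` and `B`. -/
noncomputable def rAB (k l : ℤ) (H : MG V) (A B : V) : ℤ :=
  sSup {z : ℤ | ∃ h : MG V, h.IsSubgraph H ∧ Sparse k l h ∧
    A ∈ h.verts ∧ B ∈ h.verts ∧ z = (Multiset.card h.edges : ℤ) - k * h.verts.card}

/-- `M_AB(H) = max (r_AB(H) + 2k, 0)`. -/
noncomputable def MAB (k l : ℤ) (H : MG V) (A B : V) : ℤ :=
  max (rAB k l H A B + 2 * k) 0

/-- The subgraph of `G` induced by a set `S` of vertices. -/
def induced (G : MG V) (S : Finset V) : MG V :=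
  ⟨S, G.edges.filter (· ∈ S.sym2)⟩

/-- The intersection of `g` with the subgraph induced by `VH`: vertices
`g.verts ∩ VH` and the edges of `g` with both endpoints in `VH`. -/
def inter (g : MG V) (VH : Finset V) : MG V :=
  ⟨g.verts ∩ VH, g.edges.filter (· ∈ VH.sym2)⟩

/-- The renormalizability condition: every edge of `G` with exactly one
endpoint in `VH` is incident to `A` or `B`. -/
def RenormCond (G : MG V) (VH : Finset V) (A B : V) : Prop :=
  ∀ e ∈ G.edges, (∃ v ∈ e, v ∈ VH) → (∃ v ∈ e, v ∉ VH) → (A ∈ e ∨ B ∈ e)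

/-- The renormalized graph `R(G)`: delete all edges with both endpoints in
`VH`, delete the vertices of `VH` other than `A, B`, and insert
`M_AB(H)` parallel edges between `A` and `B`, where `H` is the subgraph
induced by `VH`. -/
noncomputable def renormG (k l : ℤ) (G : MG V) (VH : Finset V) (A B : V) : MG V :=
  ⟨(G.verts \ VH) ∪ {A, B},
   G.edges.filter (fun e => e ∉ VH.sym2) +
     Multiset.replicate (MAB k l (G.induced VH) A B).toNat s(A, B)⟩

/-- Renormalization of a subgraph `g` of `G`: the part of `g` outside `VH` is
left unchanged, and its intersection `h` with the subgraph induced by `VH` is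
replaced by `M_AB(h)` parallel `A`–`B` edges if both `A` and `B` belong to `g`,
and by no edges otherwise. -/
noncomputable def renormSub (k l : ℤ) (g : MG V) (VH : Finset V) (A B : V) : MG V :=
  ⟨(g.verts \ VH) ∪ (g.verts ∩ {A, B}),
   g.edges.filter (fun e => e ∉ VH.sym2) +
     (if A ∈ g.verts ∧ B ∈ g.verts then
        Multiset.replicate (MAB k l (g.inter VH) A B).toNat s(A, B)
      else 0)⟩

/-- The maximum cardinality of a sub-multiset `E'` of the edges of `G` such
that `(V, E')` is `(k,l)`-sparse. -/
noncomputable def maxSparseCard (k l : ℤ) (G : MG V) : ℕ :=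
  sSup {n : ℕ | ∃ E' : Multiset (Sym2 V), E' ≤ G.edges ∧
    Sparse k l (⟨G.verts, E'⟩ : MG V) ∧ Multiset.card E' = n}

/-- The number of `(k,l)`-redundant edges of `G`. -/
noncomputable def nred (k l : ℤ) (G : MG V) : ℕ :=
  Multiset.card G.edges - maxSparseCard k l G

/-- Connectivity: any two vertices are joined by a path of edges. -/
def Connected (G : MG V) : Prop :=
  ∀ a ∈ G.verts, ∀ b ∈ G.verts,
    Relation.ReflTransGen (fun x y => s(x, y) ∈ G.edges) a b

end MG

/-!
Cut `g̃` along `VH`: outside `VH` it is already a piece of `G`, and inside it consists of `m̃`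
parallel `A`–`B` edges, which have to be traded for a sparse `h ⊆ H` through `A` and `B` with
`|E_h| - k|V_h| + 2k = m̃`; for `R(g) = g̃`, the graph `h` must moreover attain `r_AB(h)` itself.
Both hold if `h` has least size among the sparse subgraphs through `A` and `B` whose value
`|E_h| - k|V_h| + 2k` is at least `m̃`. Such subgraphs exist because `m̃ ≤ M_AB(H)`; deleting an
edge lowers the value by exactly one, so the value of `h` is `m̃`; and by minimality a proper
subgraph of `h` through `A` and `B` has a smaller value.
-/

theorem filter_filter_not_add {α : Type*} {p : α → Prop} [DecidablePred p] (s : Multiset α)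
    {t : Multiset α} (ht : ∀ a ∈ t, p a) : (s.filter (¬p ·) + t).filter p = t := by
  rw [Multiset.filter_add, Multiset.filter_eq_self.2 ht,
    Multiset.filter_eq_nil.2 fun _ ha => (Multiset.mem_filter.1 ha).2, zero_add]

theorem filter_not_filter_not_add {α : Type*} {p : α → Prop} [DecidablePred p] (s : Multiset α)
    {t : Multiset α} (ht : ∀ a ∈ t, p a) :
    (s.filter (¬p ·) + t).filter (¬p ·) = s.filter (¬p ·) := by
  rw [Multiset.filter_add, Multiset.filter_eq_nil.2 fun a ha => not_not.2 (ht a ha), add_zero,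
    Multiset.filter_eq_self.2 fun _ ha => (Multiset.mem_filter.1 ha).2]

namespace MG

variable {V : Type*} {k l : ℤ} {G H g h : MG V} {A B : V}

theorem IsSubgraph.trans (hgh : g.IsSubgraph h) (hhG : h.IsSubgraph G) : g.IsSubgraph G :=
  ⟨hgh.1.trans hhG.1, hgh.2.1.trans hhG.2.1, hgh.2.2⟩

/-- A graph is a subgraph of itself only if its edges join its own vertices, which being a subgraph
of some graph guarantees. -/
theorem IsSubgraph.self (hgG : g.IsSubgraph G) : g.IsSubgraph g :=
  ⟨subset_rfl, le_rfl, hgG.2.2⟩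

/-- The number of vertices and edges, the measure of the minimality argument. -/
def size (g : MG V) : ℕ :=
  g.edges.card + g.verts.card

theorem IsSubgraph.eq_of_size_le (hgh : g.IsSubgraph h) (hsize : h.size ≤ g.size) : g = h := by
  obtain ⟨hverts, hedges, -⟩ := hgh
  have hverts_card := Finset.card_le_card hverts
  have hedges_card := Multiset.card_le_card hedges
  unfold size at hsize
  have hverts_eq : g.verts = h.verts := Finset.eq_of_subset_of_card_le hverts (by lia)
  have hedges_eq : g.edges = h.edges := Multiset.eq_of_le_of_card_le hedges (by lia)
  cases g
  cases h
  simp_all only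

/-- The quantity `|E| - k|V|` maximised in the definition of `r_AB`. -/
def excess (k : ℤ) (g : MG V) : ℤ :=
  (g.edges.card : ℤ) - k * g.verts.card

theorem exists_isSubgraph_excess_eq_sub_one (k : ℤ) (hh : h.IsSubgraph h) (hne : h.edges ≠ 0) :
    ∃ g : MG V, g.IsSubgraph h ∧ g.verts = h.verts ∧ g.size < h.size ∧
      g.excess k = h.excess k - 1 := by
  classical
  obtain ⟨e, he⟩ := Multiset.exists_mem_of_ne_zero hne
  have hcard := Multiset.card_erase_add_one he
  refine ⟨⟨h.verts, h.edges.erase e⟩, ⟨subset_rfl, Multiset.erase_le _ _,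
    fun x hx => hh.2.2 x (Multiset.mem_of_mem_erase hx)⟩, rfl, ?_, ?_⟩
  · simp only [size]
    lia
  · simp only [excess]
    lia

theorem edges_ne_zero_of_lt_excess (hk : 0 ≤ k) (hcard : 1 < g.verts.card)
    (hexcess : -(2 * k) < g.excess k) : g.edges ≠ 0 := by
  intro hzero
  have hmul : k * 2 ≤ k * g.verts.card := mul_le_mul_of_nonneg_left (by exact_mod_cast hcard) hk
  simp only [excess, hzero, Multiset.card_zero, Nat.cast_zero] at hexcess
  linarith

theorem Sparse.mono (hG : Sparse k l G) (hgG : g.IsSubgraph G) : Sparse k l g :=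
  fun g' hg' hcard => hG g' (hg'.trans hgG) hcard

theorem sparse_edgeless (hk : 0 ≤ k) (hl : l ≤ 2 * k) (s : Finset V) :
    Sparse k l (⟨s, 0⟩ : MG V) := by
  rintro g ⟨-, hedges, -⟩ hcard
  have hmul : k * 2 ≤ k * g.verts.card := mul_le_mul_of_nonneg_left (by exact_mod_cast hcard) hk
  rw [Multiset.le_zero.1 hedges, Multiset.card_zero, Nat.cast_zero]
  linarith

/-- Membership of `h` in the family `S_AB(H)` of `(k,l)`-sparse subgraphs of `H` containing both
`A` and `B`. -/
structure IsSparseThrough (k l : ℤ) (H : MG V) (A B : V) (h : MG V) : Prop where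
  isSubgraph : h.IsSubgraph H
  sparse : Sparse k l h
  left_mem : A ∈ h.verts
  right_mem : B ∈ h.verts

namespace IsSparseThrough

theorem mono (hh : IsSparseThrough k l H A B h) (hHG : H.IsSubgraph G) :
    IsSparseThrough k l G A B h :=
  { hh with isSubgraph := hh.isSubgraph.trans hHG }

theorem self (hh : IsSparseThrough k l H A B h) : IsSparseThrough k l h A B h :=
  { hh with isSubgraph := hh.isSubgraph.self }

theorem of_isSubgraph (hh : IsSparseThrough k l H A B h) (hgh : g.IsSubgraph h)
    (hA : A ∈ g.verts) (hB : B ∈ g.verts) : IsSparseThrough k l H A B g :=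
  ⟨hgh.trans hh.isSubgraph, hh.sparse.mono hgh, hA, hB⟩

theorem one_lt_card (hh : IsSparseThrough k l H A B h) (hAB : A ≠ B) : 1 < h.verts.card :=
  Finset.one_lt_card.2 ⟨A, hh.left_mem, B, hh.right_mem, hAB⟩

theorem excess_le (hh : IsSparseThrough k l H A B h) (hAB : A ≠ B) : h.excess k ≤ -l := by
  have hsparse := hh.sparse h hh.isSubgraph.self (hh.one_lt_card hAB)
  unfold excess
  linarith

end IsSparseThrough

theorem isSparseThrough_pair [DecidableEq V] (hk : 0 ≤ k) (hl : l ≤ 2 * k) (hA : A ∈ H.verts)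
    (hB : B ∈ H.verts) : IsSparseThrough k l H A B ⟨{A, B}, 0⟩ where
  isSubgraph := ⟨Finset.insert_subset hA (Finset.singleton_subset_iff.2 hB), zero_le, by simp⟩
  sparse := sparse_edgeless hk hl _
  left_mem := by simp
  right_mem := by simp

theorem excess_pair [DecidableEq V] (k : ℤ) (hAB : A ≠ B) :
    (⟨{A, B}, 0⟩ : MG V).excess k = -(2 * k) := by
  simp [excess, Finset.card_pair hAB, mul_comm]

theorem rAB_eq_sSup_image (k l : ℤ) (H : MG V) (A B : V) :
    rAB k l H A B = sSup (excess k '' {h | IsSparseThrough k l H A B h}) := by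
  unfold rAB
  congr 1
  ext z
  constructor
  · rintro ⟨h, hsub, hsparse, hA, hB, rfl⟩
    exact ⟨h, ⟨hsub, hsparse, hA, hB⟩, rfl⟩
  · rintro ⟨h, hh, rfl⟩
    exact ⟨h, hh.isSubgraph, hh.sparse, hh.left_mem, hh.right_mem, rfl⟩

theorem isGreatest_rAB (hAB : A ≠ B) (hne : ∃ h, IsSparseThrough k l H A B h) :
    IsGreatest (excess k '' {h | IsSparseThrough k l H A B h}) (rAB k l H A B) := by
  have hbdd : BddAbove (excess k '' {h | IsSparseThrough k l H A B h}) :=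
    ⟨-l, Set.forall_mem_image.2 fun _ hh => hh.excess_le hAB⟩
  rw [rAB_eq_sSup_image]
  exact ⟨Int.csSup_mem (Set.Nonempty.image _ hne) hbdd, fun _ hz => le_csSup hbdd hz⟩

theorem rAB_eq_excess (hh : IsSparseThrough k l H A B h)
    (hmax : ∀ g, IsSparseThrough k l H A B g → g.excess k ≤ h.excess k) :
    rAB k l H A B = h.excess k := by
  rw [rAB_eq_sSup_image]
  exact IsGreatest.csSup_eq ⟨Set.mem_image_of_mem _ hh, Set.forall_mem_image.2 hmax⟩

theorem exists_isSparseThrough_MAB_le (hk : 0 ≤ k) (hl : l ≤ 2 * k) (hA : A ∈ H.verts)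
    (hB : B ∈ H.verts) (hAB : A ≠ B) :
    ∃ h, IsSparseThrough k l H A B h ∧ MAB k l H A B ≤ h.excess k + 2 * k := by
  classical
  have hpair := isSparseThrough_pair hk hl hA hB
  obtain ⟨⟨h, hh, hexcess⟩, hupper⟩ := isGreatest_rAB hAB ⟨_, hpair⟩
  have hnonneg : -(2 * k) ≤ rAB k l H A B := by
    rw [← excess_pair k hAB]
    exact hupper (Set.mem_image_of_mem _ hpair)
  refine ⟨h, hh, ?_⟩
  rw [hexcess, MAB]
  exact max_le le_rfl (by linarith)

section Minimal

variable {m : ℕ}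
  (hmin : MinimalFor (fun h => IsSparseThrough k l H A B h ∧ (m : ℤ) ≤ h.excess k + 2 * k) size h)
include hmin

theorem excess_eq_of_minimalFor (hk : 0 ≤ k) (hAB : A ≠ B) : h.excess k + 2 * k = m := by
  obtain ⟨hh, hle⟩ := hmin.prop
  refine le_antisymm ?_ hle
  by_contra! hlt
  have hne : h.edges ≠ 0 := edges_ne_zero_of_lt_excess hk (hh.one_lt_card hAB) (by lia)
  obtain ⟨g, hgh, hverts, hsize, hexcess⟩ :=
    exists_isSubgraph_excess_eq_sub_one k hh.isSubgraph.self hne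
  have hg : IsSparseThrough k l H A B g :=
    hh.of_isSubgraph hgh (hverts ▸ hh.left_mem) (hverts ▸ hh.right_mem)
  exact hmin.not_lt ⟨hg, by lia⟩ hsize

theorem rAB_eq_excess_of_minimalFor : rAB k l h A B = h.excess k := by
  obtain ⟨hh, hle⟩ := hmin.prop
  refine rAB_eq_excess hh.self fun g hg => ?_
  by_contra! hlt
  have hsize : h.size ≤ g.size := not_lt.1 (hmin.not_lt ⟨hg.mono hh.isSubgraph, by lia⟩)
  exact hlt.ne' (congrArg (excess k) (hg.isSubgraph.eq_of_size_le hsize))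

end Minimal

theorem exists_isSparseThrough_excess_eq (hk : 0 ≤ k) (hl : l ≤ 2 * k) (hA : A ∈ H.verts)
    (hB : B ∈ H.verts) (hAB : A ≠ B) {m : ℕ} (hm : (m : ℤ) ≤ MAB k l H A B) :
    ∃ h, IsSparseThrough k l H A B h ∧ h.excess k + 2 * k = m ∧ MAB k l h A B = m := by
  obtain ⟨h₀, hh₀, hle⟩ := exists_isSparseThrough_MAB_le hk hl hA hB hAB
  obtain ⟨h, hmin⟩ := exists_minimalFor_of_wellFoundedLT
    (fun h => IsSparseThrough k l H A B h ∧ (m : ℤ) ≤ h.excess k + 2 * k) size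
    ⟨h₀, hh₀, hm.trans hle⟩
  have hexcess := excess_eq_of_minimalFor hmin hk hAB
  refine ⟨h, hmin.prop.1, hexcess, ?_⟩
  rw [MAB, rAB_eq_excess_of_minimalFor hmin, hexcess]
  exact max_eq_left m.cast_nonneg

section Renormalization

variable [DecidableEq V] {VH : Finset V} {g' : MG V}

theorem filter_mem_renormG_edges (k l : ℤ) (G : MG V) (hA : A ∈ VH) (hB : B ∈ VH) :
    (renormG k l G VH A B).edges.filter (· ∈ VH.sym2) =
      Multiset.replicate (MAB k l (G.induced VH) A B).toNat s(A, B) :=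
  filter_filter_not_add _ fun _ he =>
    Multiset.eq_of_mem_replicate he ▸ Finset.mk_mem_sym2_iff.2 ⟨hA, hB⟩

theorem filter_notMem_renormG_edges (k l : ℤ) (G : MG V) (hA : A ∈ VH) (hB : B ∈ VH) :
    (renormG k l G VH A B).edges.filter (· ∉ VH.sym2) = G.edges.filter (· ∉ VH.sym2) :=
  filter_not_filter_not_add _ fun _ he =>
    Multiset.eq_of_mem_replicate he ▸ Finset.mk_mem_sym2_iff.2 ⟨hA, hB⟩

theorem renormG_verts_subset (k l : ℤ) (hVH : VH ⊆ G.verts) (hA : A ∈ VH) (hB : B ∈ VH) :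
    (renormG k l G VH A B).verts ⊆ G.verts :=
  Finset.union_subset Finset.sdiff_subset
    (Finset.insert_subset (hVH hA) (Finset.singleton_subset_iff.2 (hVH hB)))

theorem renormG_verts_inter_subset (k l : ℤ) (G : MG V) (VH : Finset V) (A B : V) :
    (renormG k l G VH A B).verts ∩ VH ⊆ {A, B} := by
  rw [renormG, Finset.union_inter_distrib_right, Finset.sdiff_inter_self, Finset.empty_union]
  exact Finset.inter_subset_left

/-- Every `A`–`B` edge of a subgraph of `R(G)` comes from the renormalization, because `R(G)` keeps
no edge of `G` with both ends in `VH`; hence counting them gives `m̃`. -/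
theorem filter_mem_edges_of_isSubgraph_renormG (hg' : g'.IsSubgraph (renormG k l G VH A B))
    (hA : A ∈ VH) (hB : B ∈ VH) :
    g'.edges.filter (· ∈ VH.sym2) = Multiset.replicate (g'.edges.count s(A, B)) s(A, B) := by
  have hle := Multiset.filter_le_filter (· ∈ VH.sym2) hg'.2.1
  rw [filter_mem_renormG_edges k l G hA hB] at hle
  obtain ⟨n, -, hn⟩ := Multiset.le_replicate_iff.1 hle
  rw [← Multiset.count_filter_of_pos (Finset.mk_mem_sym2_iff.2 ⟨hA, hB⟩), hn,
    Multiset.count_replicate_self]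

theorem count_le_MAB_of_isSubgraph_renormG (hg' : g'.IsSubgraph (renormG k l G VH A B))
    (hA : A ∈ VH) (hB : B ∈ VH) :
    (g'.edges.count s(A, B) : ℤ) ≤ MAB k l (G.induced VH) A B := by
  have hle := Multiset.filter_le_filter (· ∈ VH.sym2) hg'.2.1
  rw [filter_mem_renormG_edges k l G hA hB, filter_mem_edges_of_isSubgraph_renormG hg' hA hB,
    Multiset.replicate_le_replicate] at hle
  exact (Int.le_toNat (le_max_right _ _)).1 hle

/-- The candidate for a preimage of `g'` under renormalization: `g'` with its edges inside `VH`
replaced by the graph `h`. -/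
def splice (g' : MG V) (VH : Finset V) (h : MG V) : MG V :=
  ⟨g'.verts ∪ h.verts, g'.edges.filter (· ∉ VH.sym2) + h.edges⟩

theorem splice_isSubgraph (hg' : g'.IsSubgraph (renormG k l G VH A B))
    (hh : h.IsSubgraph (G.induced VH)) (hVH : VH ⊆ G.verts) (hA : A ∈ VH) (hB : B ∈ VH) :
    (g'.splice VH h).IsSubgraph G := by
  refine ⟨Finset.union_subset (hg'.1.trans (renormG_verts_subset k l hVH hA hB))
    (hh.1.trans hVH), ?_, fun e he => ?_⟩
  · have hle := Multiset.filter_le_filter (· ∉ VH.sym2) hg'.2.1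
    rw [filter_notMem_renormG_edges k l G hA hB] at hle
    calc (g'.splice VH h).edges
      _ ≤ G.edges.filter (· ∉ VH.sym2) + G.edges.filter (· ∈ VH.sym2) := add_le_add hle hh.2.1
      _ = G.edges := by rw [add_comm, Multiset.filter_add_not]
  · rcases Multiset.mem_add.1 he with he | he
    · exact Finset.sym2_mono Finset.subset_union_left (hg'.2.2 e (Multiset.mem_of_mem_filter he))
    · exact Finset.sym2_mono Finset.subset_union_right (hh.2.2 e he)

theorem mem_sym2_of_isSubgraph_induced (hh : h.IsSubgraph (G.induced VH)) :
    ∀ e ∈ h.edges, e ∈ VH.sym2 :=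
  fun _ he => Multiset.of_mem_filter (Multiset.mem_of_le hh.2.1 he)

theorem splice_inter (hh : h.IsSubgraph (G.induced VH)) (hverts : g'.verts ∩ VH ⊆ h.verts) :
    (g'.splice VH h).inter VH = h := by
  have hverts_eq : (g'.verts ∪ h.verts) ∩ VH = h.verts := by
    rw [Finset.union_inter_distrib_right, Finset.inter_eq_left.2 (show h.verts ⊆ VH from hh.1)]
    exact Finset.union_eq_right.2 hverts
  exact congrArg₂ mk hverts_eq (filter_filter_not_add _ (mem_sym2_of_isSubgraph_induced hh))

theorem renormSub_splice_verts (hg' : g'.IsSubgraph (renormG k l G VH A B))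
    (hh : h.IsSubgraph (G.induced VH)) (hA : A ∈ h.verts → A ∈ g'.verts)
    (hB : B ∈ h.verts → B ∈ g'.verts) :
    (renormSub k l (g'.splice VH h) VH A B).verts = g'.verts := by
  have hmem : ∀ x ∈ g'.verts, x ∈ VH → x = A ∨ x = B := fun x hx hxVH => by
    simpa using renormG_verts_inter_subset k l G VH A B (Finset.mem_inter.2 ⟨hg'.1 hx, hxVH⟩)
  have hhVH : ∀ x ∈ h.verts, x ∈ VH := hh.1
  ext x
  simp only [renormSub, splice, Finset.mem_union, Finset.mem_sdiff, Finset.mem_inter,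
    Finset.mem_insert, Finset.mem_singleton]
  grind

theorem renormSub_splice_edges (hg' : g'.IsSubgraph (renormG k l G VH A B))
    (hh : h.IsSubgraph (G.induced VH)) (hA : A ∈ VH) (hB : B ∈ VH)
    (hverts : g'.verts ∩ VH ⊆ h.verts) (hAh : A ∈ h.verts → A ∈ g'.verts)
    (hBh : B ∈ h.verts → B ∈ g'.verts)
    (hMAB : A ∈ g'.verts → B ∈ g'.verts → MAB k l h A B = g'.edges.count s(A, B)) :
    (renormSub k l (g'.splice VH h) VH A B).edges = g'.edges := by
  have hmem_iff : A ∈ (g'.splice VH h).verts ∧ B ∈ (g'.splice VH h).verts ↔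
      A ∈ g'.verts ∧ B ∈ g'.verts := by
    simp only [splice, Finset.mem_union]
    tauto
  have houtside : (g'.splice VH h).edges.filter (· ∉ VH.sym2) =
      g'.edges.filter (· ∉ VH.sym2) :=
    filter_not_filter_not_add _ (mem_sym2_of_isSubgraph_induced hh)
  have hinside : (if A ∈ g'.verts ∧ B ∈ g'.verts then
      Multiset.replicate (MAB k l h A B).toNat s(A, B) else 0) =
        g'.edges.filter (· ∈ VH.sym2) := by
    rw [filter_mem_edges_of_isSubgraph_renormG hg' hA hB]
    split_ifs with hboth
    · rw [hMAB hboth.1 hboth.2, Int.toNat_natCast]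
    · rw [Multiset.count_eq_zero.2 fun he =>
        hboth (Finset.mk_mem_sym2_iff.1 (hg'.2.2 _ he)), Multiset.replicate_zero]
  simp only [renormSub, splice_inter hh hverts, hmem_iff, houtside, hinside]
  rw [add_comm, Multiset.filter_add_not]

theorem renormSub_splice (hg' : g'.IsSubgraph (renormG k l G VH A B))
    (hh : h.IsSubgraph (G.induced VH)) (hA : A ∈ VH) (hB : B ∈ VH)
    (hverts : g'.verts ∩ VH ⊆ h.verts) (hAh : A ∈ h.verts → A ∈ g'.verts)
    (hBh : B ∈ h.verts → B ∈ g'.verts)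
    (hMAB : A ∈ g'.verts → B ∈ g'.verts → MAB k l h A B = g'.edges.count s(A, B)) :
    renormSub k l (g'.splice VH h) VH A B = g' :=
  congrArg₂ mk (renormSub_splice_verts hg' hh hAh hBh)
    (renormSub_splice_edges hg' hh hA hB hverts hAh hBh hMAB)

end Renormalization

end MG

theorem renorm_subgraph_lift_general {V : Type*} [DecidableEq V] {k l : ℤ} (hk : 0 ≤ k)
    (hl : l ≤ 2 * k) {G : MG V} {VH : Finset V} (hVH : VH ⊆ G.verts) {A B : V} (hA : A ∈ VH)
    (hB : B ∈ VH) (hAB : A ≠ B) {g' : MG V} (hg' : g'.IsSubgraph (MG.renormG k l G VH A B)) :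
    ∃ g : MG V, g.IsSubgraph G ∧ MG.renormSub k l g VH A B = g' ∧
      ((A ∉ g'.verts ∨ B ∉ g'.verts) → (g.inter VH).edges = 0) ∧
      (A ∈ g'.verts → B ∈ g'.verts →
        MG.Sparse k l (g.inter VH) ∧
        (g'.edges.count s(A, B) : ℤ) = ((g.inter VH).edges.card : ℤ)
          - k * (g.inter VH).verts.card + 2 * k) := by
  by_cases hboth : A ∈ g'.verts ∧ B ∈ g'.verts
  · obtain ⟨h, hh, hexcess, hMAB⟩ := MG.exists_isSparseThrough_excess_eq (H := G.induced VH) hk hl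
      hA hB hAB (MG.count_le_MAB_of_isSubgraph_renormG hg' hA hB)
    have hverts : g'.verts ∩ VH ⊆ h.verts :=
      (Finset.inter_subset_inter_right hg'.1).trans <|
        (MG.renormG_verts_inter_subset k l G VH A B).trans <|
          Finset.insert_subset hh.left_mem (Finset.singleton_subset_iff.2 hh.right_mem)
    refine ⟨g'.splice VH h, MG.splice_isSubgraph hg' hh.isSubgraph hVH hA hB,
      MG.renormSub_splice hg' hh.isSubgraph hA hB hverts (fun _ => hboth.1) (fun _ => hboth.2)
        fun _ _ => hMAB, fun hnot => absurd hboth (not_and_or.2 hnot), fun _ _ => ?_⟩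
    rw [MG.splice_inter hh.isSubgraph hverts]
    exact ⟨hh.sparse, hexcess.symm⟩
  · have hh : (⟨g'.verts ∩ VH, 0⟩ : MG V).IsSubgraph (G.induced VH) :=
      ⟨Finset.inter_subset_right, zero_le, by simp⟩
    refine ⟨g'.splice VH ⟨g'.verts ∩ VH, 0⟩, MG.splice_isSubgraph hg' hh hVH hA hB,
      MG.renormSub_splice hg' hh hA hB subset_rfl Finset.mem_of_mem_inter_left
        Finset.mem_of_mem_inter_left fun hAg hBg => absurd ⟨hAg, hBg⟩ hboth,
      fun _ => ?_, fun hAg hBg => absurd ⟨hAg, hBg⟩ hboth⟩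
    rw [MG.splice_inter hh subset_rfl]

/-- Lemma 3.3: let `H`, the subgraph of `G` induced by `VH`, satisfy the
renormalizability condition w.r.t. `A, B`. Any subgraph `g̃` of `R(G)` consists of a
sub-multiset `ē` of the unrenormalized edges of `G` together with `m̃` of the renormalized
`A`–`B` edges. Then there is a subgraph `g` of `G` with: (i) `R(g) = g̃`; (ii) if `A ∉ ṽ`
or `B ∉ ṽ` then the intersection `h` of `g` with `H` has no edges; (iii) if `A ∈ ṽ` and
`B ∈ ṽ` then `h = (V_h, E_h)` is `(k,l)`-sparse and `m̃ = |E_h| - k|V_h| + 2k`. -/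
theorem renorm_subgraph_lift {V : Type*} [DecidableEq V] (k l : ℤ)
    (hk : 1 ≤ k) (hkl : k ≤ l) (hl2k : l < 2 * k)
    (G : MG V) (hWF : G.WF) (VH : Finset V) (hVH : VH ⊆ G.verts)
    (A B : V) (hA : A ∈ VH) (hB : B ∈ VH) (hAB : A ≠ B)
    (hren : MG.RenormCond G VH A B)
    (vt : Finset V) (ebar : Multiset (Sym2 V)) (mt : ℕ)
    (hebar : ebar ≤ G.edges.filter (fun e => e ∉ VH.sym2))
    (hmt : (mt : ℤ) ≤ MG.MAB k l (G.induced VH) A B)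
    (hsub : (⟨vt, ebar + Multiset.replicate mt s(A, B)⟩ : MG V).IsSubgraph
      (MG.renormG k l G VH A B)) :
    ∃ g : MG V, g.IsSubgraph G ∧
      MG.renormSub k l g VH A B = (⟨vt, ebar + Multiset.replicate mt s(A, B)⟩ : MG V) ∧
      ((A ∉ vt ∨ B ∉ vt) → (g.inter VH).edges = 0) ∧
      (A ∈ vt → B ∈ vt →
        MG.Sparse k l (g.inter VH) ∧
        (mt : ℤ) = (Multiset.card (g.inter VH).edges : ℤ)
          - k * (g.inter VH).verts.card + 2 * k) := by
  have hnotMem : s(A, B) ∉ ebar := fun he =>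
    (Multiset.mem_filter.1 (Multiset.mem_of_le hebar he)).2 (Finset.mk_mem_sym2_iff.2 ⟨hA, hB⟩)
  simpa [hnotMem] using renorm_subgraph_lift_general (by lia) hl2k.le hVH hA hB hAB hsub
end

section
/- (Proposition 3.2 (ii).) Let k, l be integers with k ≤ l < 2k and k ≥ 1. Let G = (V, E) be a multigraph, V_H ⊆ V with distinct A, B ∈ V_H, and suppose the induced subgraph H = (V_H, E_H) satisfies the renormalizability condition with respect to A, B. Then the numbers of (k,l)-redundant edges satisfy n_red(G) = n_red(R(G)) + n_red(H). -/
/-!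
The `(k,l)`-sparse edge sets on a fixed vertex set are the independent sets of a matroid: maximal
ones all have the same size, because two tight sets sharing an edge have a tight union, so that
the maximal tight sets have pairwise disjoint edge sets.

A basis `F` of `H` can be chosen to contain a subgraph attaining `r_AB(H)`. Let `P` consist of
`M_AB(H)` copies of the edge `AB`. As `A` and `B` separate `H` from the rest of `G`, the bound
`m ≤ k n - l` for vertex sets containing both depends on the part inside `H` only through its
largest contribution to `m - k n`, and `F` and `P` contribute equally. A vertex set missing `A` or
`B` satisfies the bound as soon as its parts inside and outside `H` do, because `k ≤ l`. Hence
`F ∪ O` and `P ∪ O` are sparse for the same sets `O` of edges outside `H`. Choosing `O` maximal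
yields bases `F ∪ O` of `G` and `P ∪ O` of `R(G)`, and since all of `P` lies in the latter,
counting edges gives the formula.
-/

namespace MG

variable {V : Type*} {k l : ℤ}

lemma one_lt_card_of_mem_sym2 {e : Sym2 V} {X : Finset V} (hdiag : ¬ e.IsDiag)
    (he : e ∈ X.sym2) : 1 < X.card := by
  induction e with
  | _ a b =>
    obtain ⟨ha, hb⟩ := Finset.mk_mem_sym2_iff.1 he
    exact Finset.one_lt_card.2 ⟨a, ha, b, hb, hdiag⟩

lemma Sparse.mono_s8 {W W' : Finset V} {I J : Multiset (Sym2 V)} (h : Sparse k l ⟨W', J⟩)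
    (hW : W ⊆ W') (hIJ : I ≤ J) : Sparse k l ⟨W, I⟩ :=
  fun G' hG' => h G' ⟨hG'.1.trans hW, hG'.2.1.trans hIJ, hG'.2.2⟩

lemma WF.mono_s8 {W : Finset V} {I J : Multiset (Sym2 V)} (h : WF ⟨W, J⟩) (hIJ : I ≤ J) :
    WF ⟨W, I⟩ :=
  ⟨fun e he => h.1 e (Multiset.mem_of_le hIJ he), fun e he => h.2 e (Multiset.mem_of_le hIJ he)⟩

lemma mul_card_sub_nonneg (hk : 0 ≤ k) (hl : l ≤ 2 * k) {X : Finset V} (hX : 1 < X.card) :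
    0 ≤ k * X.card - l := by
  have : (2 : ℤ) ≤ X.card := mod_cast hX
  nlinarith

section SpanCard

variable [DecidableEq V]

/-- The number of edges of `I`, with multiplicity, that join vertices of `X`; usually written
`i_I(X)`. -/
def spanCard (I : Multiset (Sym2 V)) (X : Finset V) : ℕ :=
  I.countP (· ∈ X.sym2)

lemma mem_sym2_inter {e : Sym2 V} {X Y : Finset V} :
    e ∈ (X ∩ Y).sym2 ↔ e ∈ X.sym2 ∧ e ∈ Y.sym2 := by
  simp only [Finset.mem_sym2_iff, Finset.mem_inter, forall_and]

lemma spanCard_add (I J : Multiset (Sym2 V)) (X : Finset V) :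
    spanCard (I + J) X = spanCard I X + spanCard J X :=
  Multiset.countP_add _ _ _

lemma spanCard_mono {I J : Multiset (Sym2 V)} {X Y : Finset V} (hIJ : I ≤ J) (hXY : X ⊆ Y) :
    spanCard I X ≤ spanCard J Y := by
  simp only [spanCard, Multiset.countP_eq_card_filter]
  exact Multiset.card_le_card <| (Multiset.filter_le_filter _ hIJ).trans <|
    Multiset.monotone_filter_right _ fun _ he => Finset.sym2_mono hXY he

lemma spanCard_eq_card {I : Multiset (Sym2 V)} {X : Finset V} (h : ∀ e ∈ I, e ∈ X.sym2) :
    spanCard I X = Multiset.card I :=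
  Multiset.countP_eq_card.2 h

lemma spanCard_inter {I : Multiset (Sym2 V)} {W : Finset V} (h : ∀ e ∈ I, e ∈ W.sym2)
    (X : Finset V) : spanCard I (X ∩ W) = spanCard I X :=
  Multiset.countP_congr rfl fun e he => by simp only [mem_sym2_inter, h e he, and_true]

lemma spanCard_replicate (n : ℕ) (A B : V) (X : Finset V) :
    spanCard (Multiset.replicate n s(A, B)) X = if A ∈ X ∧ B ∈ X then n else 0 := by
  simp only [← Finset.mk_mem_sym2_iff]
  split_ifs with h
  · rw [spanCard_eq_card fun e he => Multiset.eq_of_mem_replicate he ▸ h,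
      Multiset.card_replicate]
  · exact Multiset.countP_eq_zero.2 fun e he => Multiset.eq_of_mem_replicate he ▸ h

lemma spanCard_eq_zero {I : Multiset (Sym2 V)} (hI : ∀ e ∈ I, ¬ e.IsDiag) {X : Finset V}
    (hX : X.card ≤ 1) : spanCard I X = 0 :=
  Multiset.countP_eq_zero.2 fun e he heX =>
    hX.not_gt (one_lt_card_of_mem_sym2 (hI e he) heX)

lemma spanCard_add_spanCard_le (I : Multiset (Sym2 V)) (X Y : Finset V) :
    spanCard I X + spanCard I Y ≤ spanCard I (X ∪ Y) + spanCard I (X ∩ Y) := by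
  induction I using Multiset.induction with
  | empty => simp [spanCard]
  | cons e I ih =>
    have hX : e ∈ X.sym2 → e ∈ (X ∪ Y).sym2 := (Finset.sym2_mono Finset.subset_union_left ·)
    have hY : e ∈ Y.sym2 → e ∈ (X ∪ Y).sym2 := (Finset.sym2_mono Finset.subset_union_right ·)
    simp only [spanCard, Multiset.countP_cons, mem_sym2_inter] at ih ⊢
    grind

lemma sparse_iff {W : Finset V} {I : Multiset (Sym2 V)} :
    Sparse k l ⟨W, I⟩ ↔ ∀ X ⊆ W, 1 < X.card → (spanCard I X : ℤ) ≤ k * X.card - l := by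
  simp only [spanCard, Multiset.countP_eq_card_filter]
  constructor
  · intro h X hX hcard
    exact h ⟨X, I.filter (· ∈ X.sym2)⟩
      ⟨hX, Multiset.filter_le _ _, fun e he => Multiset.of_mem_filter he⟩ hcard
  · rintro h ⟨X, J⟩ ⟨hX, hJI, hJX⟩ hcard
    have hle : Multiset.card J ≤ Multiset.card (I.filter (· ∈ X.sym2)) :=
      Multiset.card_le_card (Multiset.le_filter.2 ⟨hJI, hJX⟩)
    exact (Int.ofNat_le.2 hle).trans (h X hX hcard)

lemma WF.spanCard_le_of_sparse {W X Y : Finset V} {I : Multiset (Sym2 V)} (hI : WF ⟨W, I⟩)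
    (hs : Sparse k l ⟨W, I⟩) (hk : 0 ≤ k) (hl : l ≤ 2 * k) (hX : X ⊆ W) (hXY : X ⊆ Y)
    (hY : 1 < Y.card) : (spanCard I X : ℤ) ≤ k * Y.card - l := by
  rcases Nat.lt_or_ge 1 X.card with hX1 | hX1
  · have hcard : (X.card : ℤ) ≤ Y.card := mod_cast Finset.card_le_card hXY
    have hle := sparse_iff.1 hs X hX hX1
    nlinarith
  · rw [spanCard_eq_zero hI.1 hX1]
    exact mul_card_sub_nonneg hk hl hY

end SpanCard

lemma sparse_zero (hk : 0 ≤ k) (hl : l ≤ 2 * k) (W : Finset V) : Sparse k l ⟨W, 0⟩ := by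
  classical
  exact sparse_iff.2 fun X _ hX => by simpa [spanCard] using mul_card_sub_nonneg hk hl hX

lemma WF.sparse_of_sparse {W : Finset V} {I : Multiset (Sym2 V)} (hI : WF ⟨W, I⟩)
    (hs : Sparse k l ⟨W, I⟩) (hk : 0 ≤ k) (hl : l ≤ 2 * k) (W' : Finset V) :
    Sparse k l ⟨W', I⟩ := by
  classical
  refine sparse_iff.2 fun X _ hX1 => ?_
  rw [← spanCard_inter hI.2 X]
  exact hI.spanCard_le_of_sparse hs hk hl Finset.inter_subset_right Finset.inter_subset_left hX1

/-! ### Bases of the sparsity matroid -/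

/-- `K` is a maximal sparse sub-multiset of the edges of `G`, that is, a basis of the
`(k,l)`-sparsity matroid of `G`. -/
def IsBasis (k l : ℤ) (G : MG V) (K : Multiset (Sym2 V)) : Prop :=
  Maximal (fun K => K ≤ G.edges ∧ Sparse k l ⟨G.verts, K⟩) K

lemma exists_le_maximal_of_le {α : Type*} {p : Multiset α → Prop} {I E : Multiset α}
    (hI : I ≤ E) (hp : p I) : ∃ K, I ≤ K ∧ Maximal (fun K => K ≤ E ∧ p K) K := by
  classical
  refine Set.Finite.exists_le_maximal (s := {K | K ≤ E ∧ p K}) ?_ ⟨hI, hp⟩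
  exact E.powerset.toFinset.finite_toSet.subset fun K hK => by simpa using hK.1

lemma exists_le_isBasis {G : MG V} {I : Multiset (Sym2 V)} (hI : I ≤ G.edges)
    (hs : Sparse k l ⟨G.verts, I⟩) : ∃ K, I ≤ K ∧ IsBasis k l G K :=
  exists_le_maximal_of_le hI hs

lemma Sparse.isBasis {W : Finset V} {I : Multiset (Sym2 V)} (hs : Sparse k l ⟨W, I⟩) :
    IsBasis k l ⟨W, I⟩ I :=
  ⟨⟨le_rfl, hs⟩, fun _ hK _ => hK.1⟩

lemma IsBasis.of_verts_subset {W W' : Finset V} {E K : Multiset (Sym2 V)} (hE : WF ⟨W, E⟩)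
    (hk : 0 ≤ k) (hl : l ≤ 2 * k) (hW : W ⊆ W') (hK : IsBasis k l ⟨W, E⟩ K) :
    IsBasis k l ⟨W', E⟩ K :=
  ⟨⟨hK.prop.1, (hE.mono_s8 hK.prop.1).sparse_of_sparse hK.prop.2 hk hl W'⟩,
    fun _ hJ hKJ => hK.le_of_ge ⟨hJ.1, hJ.2.mono_s8 hW le_rfl⟩ hKJ⟩

lemma IsBasis.not_sparse_cons {G : MG V} {K : Multiset (Sym2 V)} (hK : IsBasis k l G K)
    {e : Sym2 V} (he : e ::ₘ K ≤ G.edges) : ¬ Sparse k l ⟨G.verts, e ::ₘ K⟩ :=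
  fun hs => (Multiset.lt_cons_self K e).not_ge
    (hK.le_of_ge ⟨he, hs⟩ (Multiset.le_cons_self K e))

lemma isBasis_of_not_sparse_cons {G : MG V} {K : Multiset (Sym2 V)} (hKE : K ≤ G.edges)
    (hs : Sparse k l ⟨G.verts, K⟩)
    (hcons : ∀ e, e ::ₘ K ≤ G.edges → ¬ Sparse k l ⟨G.verts, e ::ₘ K⟩) : IsBasis k l G K := by
  refine ⟨⟨hKE, hs⟩, fun J ⟨hJE, hJs⟩ hKJ => ?_⟩
  by_contra hJK
  obtain ⟨e, he⟩ := Multiset.lt_iff_cons_le.1 (lt_of_le_not_ge hKJ hJK)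
  exact hcons e (he.trans hJE) (hJs.mono_s8 subset_rfl he)

lemma cons_le_or_cons_le_of_cons_add_le {α : Type*} {e : α} {I J E F : Multiset α} (hI : I ≤ E)
    (hJ : J ≤ F) (h : e ::ₘ (I + J) ≤ E + F) : e ::ₘ I ≤ E ∨ e ::ₘ J ≤ F := by
  classical
  obtain ⟨E, rfl⟩ := Multiset.le_iff_exists_add.1 hI
  obtain ⟨F, rfl⟩ := Multiset.le_iff_exists_add.1 hJ
  rw [add_add_add_comm, ← Multiset.singleton_add, add_comm, add_le_add_iff_left,
    Multiset.singleton_le, Multiset.mem_add] at h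
  simp only [← Multiset.singleton_add, add_comm _ I, add_comm _ J, add_le_add_iff_left,
    Multiset.singleton_le]
  exact h

lemma IsBasis.add {W : Finset V} {E₁ E₂ K₁ K₂ : Multiset (Sym2 V)}
    (hK₁ : IsBasis k l ⟨W, E₁⟩ K₁)
    (hK₂ : Maximal (fun O => O ≤ E₂ ∧ Sparse k l ⟨W, K₁ + O⟩) K₂) :
    IsBasis k l ⟨W, E₁ + E₂⟩ (K₁ + K₂) := by
  refine isBasis_of_not_sparse_cons (add_le_add hK₁.prop.1 hK₂.prop.1) hK₂.prop.2 fun e he hs => ?_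
  rcases cons_le_or_cons_le_of_cons_add_le hK₁.prop.1 hK₂.prop.1 he with he₁ | he₂
  · exact hK₁.not_sparse_cons he₁ <|
      hs.mono_s8 subset_rfl (Multiset.cons_le_cons e (Multiset.le_add_right K₁ K₂))
  · refine (Multiset.lt_cons_self K₂ e).not_ge (hK₂.le_of_ge ⟨he₂, ?_⟩ (Multiset.le_cons_self K₂ e))
    rwa [Multiset.add_cons]

section Blocks

variable [DecidableEq V]

/-- A vertex set `X` of `G` that meets the sparsity bound with equality. Unlike in `MG.Tight`,
the subgraph induced on `X` is not required to be sparse. -/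
def IsTightSet (k l : ℤ) (G : MG V) (X : Finset V) : Prop :=
  X ⊆ G.verts ∧ 1 < X.card ∧ (spanCard G.edges X : ℤ) = k * X.card - l

/-- An inclusion-maximal tight set. -/
def IsBlock (k l : ℤ) (G : MG V) (X : Finset V) : Prop :=
  Maximal (IsTightSet k l G) X

lemma IsTightSet.union {G : MG V} {X Y : Finset V} (hG : Sparse k l G) (hX : IsTightSet k l G X)
    (hY : IsTightSet k l G Y) (hXY : 1 < (X ∩ Y).card) : IsTightSet k l G (X ∪ Y) := by
  obtain ⟨hXG, hX1, hXeq⟩ := hX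
  obtain ⟨hYG, -, hYeq⟩ := hY
  have hUG : X ∪ Y ⊆ G.verts := Finset.union_subset hXG hYG
  have hU1 : 1 < (X ∪ Y).card := hX1.trans_le (Finset.card_le_card Finset.subset_union_left)
  have hUle := sparse_iff.1 hG (X ∪ Y) hUG hU1
  have hIle := sparse_iff.1 hG (X ∩ Y) (Finset.inter_subset_left.trans hXG) hXY
  have hsuper : (spanCard G.edges X + spanCard G.edges Y : ℤ) ≤
      spanCard G.edges (X ∪ Y) + spanCard G.edges (X ∩ Y) :=
    mod_cast spanCard_add_spanCard_le G.edges X Y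
  have hcard : ((X ∪ Y).card + (X ∩ Y).card : ℤ) = X.card + Y.card :=
    mod_cast Finset.card_union_add_card_inter X Y
  exact ⟨hUG, hU1, by linarith [congrArg (k * ·) hcard]⟩

lemma IsBlock.eq_of_mem_sym2 {G : MG V} {X Y : Finset V} (hG : Sparse k l G)
    (hX : IsBlock k l G X) (hY : IsBlock k l G Y) {e : Sym2 V} (hdiag : ¬ e.IsDiag)
    (heX : e ∈ X.sym2) (heY : e ∈ Y.sym2) : X = Y := by
  have hU : IsTightSet k l G (X ∪ Y) :=
    hX.prop.union hG hY.prop (one_lt_card_of_mem_sym2 hdiag (mem_sym2_inter.2 ⟨heX, heY⟩))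
  exact (hX.eq_of_le hU Finset.subset_union_left).trans
    (hY.eq_of_le hU Finset.subset_union_right).symm

lemma IsTightSet.exists_isBlock {G : MG V} {X : Finset V} (hX : IsTightSet k l G X) :
    ∃ Y, X ⊆ Y ∧ IsBlock k l G Y := by
  refine Set.Finite.exists_le_maximal (s := {Y | IsTightSet k l G Y}) ?_ hX
  exact G.verts.powerset.finite_toSet.subset fun Y hY => Finset.mem_coe.2 <|
    Finset.mem_powerset.2 hY.1

lemma exists_isTightSet_of_not_sparse_cons {W : Finset V} {I : Multiset (Sym2 V)} {e : Sym2 V}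
    (hs : Sparse k l ⟨W, I⟩) (hcons : ¬ Sparse k l ⟨W, e ::ₘ I⟩) :
    ∃ X, IsTightSet k l ⟨W, I⟩ X ∧ e ∈ X.sym2 := by
  rw [sparse_iff] at hs hcons
  push Not at hcons
  obtain ⟨X, hXW, hX1, hlt⟩ := hcons
  have hle := hs X hXW hX1
  rw [spanCard, Multiset.countP_cons, ← spanCard] at hlt
  by_cases heX : e ∈ X.sym2
  · rw [if_pos heX] at hlt
    exact ⟨X, ⟨hXW, hX1, by push_cast at hlt; dsimp only; omega⟩, heX⟩
  · rw [if_neg heX] at hlt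
    exact absurd hle hlt.not_ge

lemma IsBasis.exists_isBlock_or_count_le {G : MG V} {K : Multiset (Sym2 V)}
    (hK : IsBasis k l G K) (e : Sym2 V) :
    (∃ X, IsBlock k l ⟨G.verts, K⟩ X ∧ e ∈ X.sym2) ∨ G.edges.count e ≤ K.count e := by
  refine or_iff_not_imp_right.2 fun hlt => ?_
  have he : e ::ₘ K ≤ G.edges := by
    refine Multiset.le_iff_count.2 fun f => ?_
    have := Multiset.le_iff_count.1 hK.prop.1 f
    rw [Multiset.count_cons]
    split_ifs with hf
    · subst hf; omega
    · exact this
  obtain ⟨X, hX, heX⟩ := exists_isTightSet_of_not_sparse_cons hK.prop.2 (hK.not_sparse_cons he)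
  obtain ⟨Y, hXY, hY⟩ := hX.exists_isBlock
  exact ⟨Y, hY, Finset.sym2_mono hXY heX⟩

end Blocks

lemma countP_exists_eq_sum {α ι : Type*} (p : ι → α → Prop) [∀ i, DecidablePred (p i)]
    (S : Finset ι) [DecidablePred fun a => ∃ i ∈ S, p i a] (s : Multiset α)
    (huniq : ∀ a ∈ s, ∀ i ∈ S, ∀ j ∈ S, p i a → p j a → i = j) :
    s.countP (fun a => ∃ i ∈ S, p i a) = ∑ i ∈ S, s.countP (p i) := by
  induction s using Multiset.induction with
  | empty => simp only [Multiset.countP_zero, Finset.sum_const_zero]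
  | cons a s ih =>
    have hone : (if ∃ i ∈ S, p i a then 1 else 0) = ∑ i ∈ S, if p i a then 1 else 0 := by
      split_ifs with h
      · obtain ⟨i, hi, hia⟩ := h
        rw [Finset.sum_eq_single_of_mem i hi fun j hj hji => if_neg fun hja =>
          hji (huniq a (Multiset.mem_cons_self a s) j hj i hi hja hia), if_pos hia]
      · exact (Finset.sum_eq_zero fun i hi => if_neg fun hia => h ⟨i, hi, hia⟩).symm
    simp only [Multiset.countP_cons, Finset.sum_add_distrib, hone,
      ih fun b hb => huniq b (Multiset.mem_cons_of_mem hb)]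

theorem IsBasis.card_le_of_sparse {G : MG V} (hG : ∀ e ∈ G.edges, ¬ e.IsDiag)
    {J K : Multiset (Sym2 V)} (hK : IsBasis k l G K) (hJ : J ≤ G.edges)
    (hs : Sparse k l ⟨G.verts, J⟩) : Multiset.card J ≤ Multiset.card K := by
  classical
  let blocks := G.verts.powerset.filter (IsBlock k l ⟨G.verts, K⟩)
  have isBlock {X} (hX : X ∈ blocks) : IsBlock k l ⟨G.verts, K⟩ X := (Finset.mem_filter.1 hX).2
  let covered (e : Sym2 V) : Prop := ∃ X ∈ blocks, e ∈ X.sym2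
  have countP_covered {I} (hI : I ≤ G.edges) : I.countP covered = ∑ X ∈ blocks, spanCard I X :=
    countP_exists_eq_sum (fun X e => e ∈ X.sym2) blocks I fun e he X hX Y hY =>
      (isBlock hX).eq_of_mem_sym2 hK.prop.2 (isBlock hY) (hG e (Multiset.mem_of_le hI he))
  have hcovered : J.countP covered ≤ K.countP covered := by
    rw [countP_covered hJ, countP_covered hK.prop.1]
    refine Finset.sum_le_sum fun X hX => ?_
    obtain ⟨hXG, hX1, hXeq⟩ := (isBlock hX).prop
    exact Int.ofNat_le.1 ((sparse_iff.1 hs X hXG hX1).trans_eq hXeq.symm)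
  have huncovered : J.countP (¬ covered ·) ≤ K.countP (¬ covered ·) := by
    simp only [Multiset.countP_eq_card_filter]
    refine Multiset.card_le_card (Multiset.le_iff_count.2 fun e => ?_)
    simp only [Multiset.count_filter]
    split_ifs with he
    · exact le_rfl
    · rcases hK.exists_isBlock_or_count_le e with ⟨X, hX, heX⟩ | hcount
      · exact absurd ⟨X, Finset.mem_filter.2 ⟨Finset.mem_powerset.2 hX.prop.1, hX⟩, heX⟩ he
      · exact (Multiset.count_le_of_le e hJ).trans hcount
  rw [Multiset.card_eq_countP_add_countP covered J, Multiset.card_eq_countP_add_countP covered K]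
  exact add_le_add hcovered huncovered

lemma IsBasis.maxSparseCard_eq {G : MG V} (hG : ∀ e ∈ G.edges, ¬ e.IsDiag)
    {K : Multiset (Sym2 V)} (hK : IsBasis k l G K) : maxSparseCard k l G = Multiset.card K :=
  IsGreatest.csSup_eq ⟨⟨K, hK.prop.1, hK.prop.2, rfl⟩, by
    rintro _ ⟨J, hJ, hs, rfl⟩
    exact hK.card_le_of_sparse hG hJ hs⟩

lemma nred_add_maxSparseCard (k l : ℤ) (G : MG V) :
    nred k l G + maxSparseCard k l G = Multiset.card G.edges :=
  Nat.sub_add_cancel <| csSup_le' <| by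
    rintro _ ⟨J, hJ, -, rfl⟩
    exact Multiset.card_le_card hJ

/-! ### The excess of a subgraph through two vertices -/

/-- The values `|E_h| - k |V_h|`, for `(k,l)`-sparse subgraphs `h` of `H` containing `A` and `B`,
of which `r_AB(H)` is the maximum. -/
def sparseExcesses (k l : ℤ) (H : MG V) (A B : V) : Set ℤ :=
  {z | ∃ h : MG V, h.IsSubgraph H ∧ Sparse k l h ∧ A ∈ h.verts ∧ B ∈ h.verts ∧
    z = (Multiset.card h.edges : ℤ) - k * h.verts.card}

lemma neg_two_mul_mem_sparseExcesses (hk : 0 ≤ k) (hl : l ≤ 2 * k) {H : MG V} {A B : V}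
    (hA : A ∈ H.verts) (hB : B ∈ H.verts) (hAB : A ≠ B) :
    -(2 * k) ∈ sparseExcesses k l H A B := by
  classical
  refine ⟨⟨{A, B}, 0⟩, ⟨?_, Multiset.zero_le _, by simp⟩, sparse_zero hk hl _, by simp, by simp, ?_⟩
  · exact Finset.insert_subset hA (Finset.singleton_subset_iff.2 hB)
  · simp [Finset.card_pair hAB, mul_comm]

lemma isGreatest_rAB_s8 (hk : 0 ≤ k) (hl : l ≤ 2 * k) {H : MG V} {A B : V} (hA : A ∈ H.verts)
    (hB : B ∈ H.verts) (hAB : A ≠ B) : IsGreatest (sparseExcesses k l H A B) (rAB k l H A B) := by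
  have hbdd : BddAbove (sparseExcesses k l H A B) := by
    refine ⟨-l, ?_⟩
    rintro _ ⟨h, hsub, hs, hAh, hBh, rfl⟩
    linarith [hs h ⟨subset_rfl, le_rfl, hsub.2.2⟩ (Finset.one_lt_card.2 ⟨A, hAh, B, hBh, hAB⟩)]
  exact ⟨Int.csSup_mem ⟨_, neg_two_mul_mem_sparseExcesses hk hl hA hB hAB⟩ hbdd,
    fun _ hz => le_csSup hbdd hz⟩

lemma toNat_MAB (hk : 0 ≤ k) (hl : l ≤ 2 * k) {H : MG V} {A B : V} (hA : A ∈ H.verts)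
    (hB : B ∈ H.verts) (hAB : A ≠ B) : ((MAB k l H A B).toNat : ℤ) = rAB k l H A B + 2 * k := by
  have hr : -(2 * k) ≤ rAB k l H A B :=
    (isGreatest_rAB_s8 hk hl hA hB hAB).2 (neg_two_mul_mem_sparseExcesses hk hl hA hB hAB)
  rw [MAB, max_eq_left (by linarith), Int.toNat_of_nonneg (by linarith)]

section Gluing

variable [DecidableEq V]

/-- The values `i_I(Y) - k |Y|`, for vertex sets `Y ⊆ W` containing `A` and `B`. -/
def spanExcesses (k : ℤ) (W : Finset V) (I : Multiset (Sym2 V)) (A B : V) : Set ℤ :=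
  {z | ∃ Y ⊆ W, A ∈ Y ∧ B ∈ Y ∧ z = (spanCard I Y : ℤ) - k * Y.card}

lemma spanExcesses_subset_sparseExcesses {H : MG V} {F : Multiset (Sym2 V)} (hF : F ≤ H.edges)
    (hs : Sparse k l ⟨H.verts, F⟩) (A B : V) :
    spanExcesses k H.verts F A B ⊆ sparseExcesses k l H A B := by
  rintro _ ⟨Y, hY, hAY, hBY, rfl⟩
  exact ⟨⟨Y, F.filter (· ∈ Y.sym2)⟩,
    ⟨hY, (Multiset.filter_le _ _).trans hF, fun e he => Multiset.of_mem_filter he⟩,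
    hs.mono_s8 hY (Multiset.filter_le _ _), hAY, hBY, by
      rw [spanCard, Multiset.countP_eq_card_filter]⟩

lemma exists_isBasis_isGreatest_rAB (hk : 0 ≤ k) (hl : l ≤ 2 * k) {H : MG V} (hH : H.WF) {A B : V}
    (hA : A ∈ H.verts) (hB : B ∈ H.verts) (hAB : A ≠ B) :
    ∃ F, IsBasis k l H F ∧ IsGreatest (spanExcesses k H.verts F A B) (rAB k l H A B) := by
  obtain ⟨hmem, hub⟩ := isGreatest_rAB_s8 hk hl hA hB hAB
  obtain ⟨⟨X, I⟩, ⟨hXH, hIH, hIX⟩, hIs, hAX, hBX, hr⟩ := hmem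
  have hIwf : WF ⟨X, I⟩ := ⟨fun e he => hH.1 e (Multiset.mem_of_le hIH he), hIX⟩
  obtain ⟨F, hIF, hF⟩ := exists_le_isBasis hIH (hIwf.sparse_of_sparse hIs hk hl H.verts)
  have hFub : rAB k l H A B ∈ upperBounds (spanExcesses k H.verts F A B) :=
    upperBounds_mono_set (spanExcesses_subset_sparseExcesses hF.prop.1 hF.prop.2 A B) hub
  have hXmem : (spanCard F X : ℤ) - k * X.card ∈ spanExcesses k H.verts F A B :=
    ⟨X, hXH, hAX, hBX, rfl⟩
  have hle : rAB k l H A B ≤ (spanCard F X : ℤ) - k * X.card := by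
    rw [hr, ← spanCard_eq_card hIX]
    exact sub_le_sub_right (Int.ofNat_le.2 (spanCard_mono hIF subset_rfl)) _
  exact ⟨F, hF, le_antisymm hle (hFub hXmem) ▸ hXmem, hFub⟩

/-! ### Gluing along two vertices -/

lemma Sparse.replicate_add {W₁ W₂ : Finset V} {F O : Multiset (Sym2 V)} {A B : V} {M : ℕ}
    (hAB : A ≠ B) (hW : W₁ ∩ W₂ = {A, B}) (hM : (M : ℤ) - 2 * k ∈ spanExcesses k W₁ F A B)
    (hs : Sparse k l ⟨W₁ ∪ W₂, F + O⟩) : Sparse k l ⟨W₂, Multiset.replicate M s(A, B) + O⟩ := by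
  refine sparse_iff.2 fun X hX hX1 => ?_
  rw [spanCard_add, spanCard_replicate]
  split_ifs with hABX
  · obtain ⟨Y, hY, hAY, hBY, hMY⟩ := hM
    have hYX : Y ∩ X = {A, B} := by
      refine (Finset.inter_subset_inter hY hX |>.trans_eq hW).antisymm ?_
      simp only [Finset.insert_subset_iff, Finset.singleton_subset_iff, Finset.mem_inter]
      exact ⟨⟨hAY, hABX.1⟩, hBY, hABX.2⟩
    have hcard : ((Y ∪ X).card + 2 : ℤ) = Y.card + X.card := by
      have := Finset.card_union_add_card_inter Y X
      rw [hYX, Finset.card_pair hAB] at this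
      exact mod_cast this
    have hle := sparse_iff.1 hs (Y ∪ X) (Finset.union_subset_union hY hX)
      (hX1.trans_le (Finset.card_le_card Finset.subset_union_right))
    have hF : spanCard F Y ≤ spanCard F (Y ∪ X) := spanCard_mono le_rfl Finset.subset_union_left
    have hO : spanCard O X ≤ spanCard O (Y ∪ X) := spanCard_mono le_rfl Finset.subset_union_right
    rw [spanCard_add] at hle
    push_cast at hle ⊢
    linarith [congrArg (k * ·) hcard]
  · have hle := sparse_iff.1 hs X (hX.trans Finset.subset_union_right) hX1
    rw [spanCard_add] at hle
    push_cast at hle ⊢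
    linarith

lemma spanCard_add_le_of_card_inter_le_one (hk : 0 ≤ k) (hkl : k ≤ l) (hl : l ≤ 2 * k)
    {W₁ W₂ X Y : Finset V} {F O : Multiset (Sym2 V)} (hF : WF ⟨W₁, F⟩) (hO : WF ⟨W₂, O⟩)
    (hFs : Sparse k l ⟨W₁, F⟩) (hOs : Sparse k l ⟨W₂, O⟩) (hX : X ⊆ W₁) (hY : Y ⊆ W₂)
    (hXY : (X ∩ Y).card ≤ 1) (hXY1 : 1 < (X ∪ Y).card) :
    (spanCard F X + spanCard O Y : ℤ) ≤ k * (X ∪ Y).card - l := by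
  rcases Nat.lt_or_ge 1 X.card with hX1 | hX1
  · rcases Nat.lt_or_ge 1 Y.card with hY1 | hY1
    · have hFX := sparse_iff.1 hFs X hX hX1
      have hOY := sparse_iff.1 hOs Y hY hY1
      have hcard : (X.card + Y.card : ℤ) ≤ (X ∪ Y).card + 1 := by
        have := Finset.card_union_add_card_inter X Y
        omega
      linarith [mul_le_mul_of_nonneg_left hcard hk]
    · simpa [spanCard_eq_zero hO.1 hY1] using
        hF.spanCard_le_of_sparse hFs hk hl hX Finset.subset_union_left hXY1
  · simpa [spanCard_eq_zero hF.1 hX1] using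
      hO.spanCard_le_of_sparse hOs hk hl hY Finset.subset_union_right hXY1

lemma Sparse.of_replicate_add (hk : 0 ≤ k) (hkl : k ≤ l) (hl : l ≤ 2 * k) {W₁ W₂ : Finset V}
    {F O : Multiset (Sym2 V)} {A B : V} {M : ℕ} (hF : WF ⟨W₁, F⟩) (hO : WF ⟨W₂, O⟩) (hAB : A ≠ B)
    (hW : W₁ ∩ W₂ = {A, B}) (hFs : Sparse k l ⟨W₁, F⟩)
    (hM : (M : ℤ) - 2 * k ∈ upperBounds (spanExcesses k W₁ F A B))
    (hs : Sparse k l ⟨W₂, Multiset.replicate M s(A, B) + O⟩) :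
    Sparse k l ⟨W₁ ∪ W₂, F + O⟩ := by
  refine sparse_iff.2 fun X hX hX1 => ?_
  have hunion : (X ∩ W₁) ∪ (X ∩ W₂) = X := by
    rw [← Finset.inter_union_distrib_left, Finset.inter_eq_left.2 hX]
  have hinter : (X ∩ W₁) ∩ (X ∩ W₂) = X ∩ {A, B} := by rw [← Finset.inter_inter_distrib_left, hW]
  rw [spanCard_add, ← spanCard_inter hF.2 X, ← spanCard_inter hO.2 X]
  push_cast
  by_cases hABX : {A, B} ⊆ X
  · have hABW : A ∈ (X ∩ W₁) ∩ (X ∩ W₂) ∧ B ∈ (X ∩ W₁) ∩ (X ∩ W₂) := by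
      simp [hinter, Finset.inter_eq_right.2 hABX]
    simp only [Finset.mem_inter (s₁ := X ∩ W₁)] at hABW
    obtain ⟨⟨hA₁, hA₂⟩, hB₁, hB₂⟩ := hABW
    have hcard : (X.card + 2 : ℤ) = (X ∩ W₁).card + (X ∩ W₂).card := by
      have := Finset.card_union_add_card_inter (X ∩ W₁) (X ∩ W₂)
      rw [hunion, hinter, Finset.inter_eq_right.2 hABX, Finset.card_pair hAB] at this
      exact mod_cast this
    have hFle := hM ⟨X ∩ W₁, Finset.inter_subset_right, hA₁, hB₁, rfl⟩
    have hOle := sparse_iff.1 hs (X ∩ W₂) Finset.inter_subset_right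
      (Finset.one_lt_card.2 ⟨A, hA₂, B, hB₂, hAB⟩)
    rw [spanCard_add, spanCard_replicate, if_pos ⟨hA₂, hB₂⟩] at hOle
    push_cast at hOle
    linarith [congrArg (k * ·) hcard]
  · have hlt : (X ∩ {A, B}).card < ({A, B} : Finset V).card :=
      Finset.card_lt_card (Finset.inter_subset_right.ssubset_of_ne
        (hABX ∘ Finset.inter_eq_right.1))
    have hle := spanCard_add_le_of_card_inter_le_one hk hkl hl hF hO hFs
      (hs.mono_s8 subset_rfl (Multiset.le_add_left O _)) Finset.inter_subset_right
      Finset.inter_subset_right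
      (by rw [hinter]; exact Nat.le_of_lt_succ (hlt.trans_eq (Finset.card_pair hAB)))
      (by rwa [hunion])
    rwa [hunion] at hle

theorem sparse_add_iff_sparse_replicate_add (hk : 0 ≤ k) (hkl : k ≤ l) (hl : l ≤ 2 * k)
    {W₁ W₂ : Finset V} {F O : Multiset (Sym2 V)} {A B : V} {M : ℕ} (hF : WF ⟨W₁, F⟩)
    (hO : WF ⟨W₂, O⟩) (hAB : A ≠ B) (hW : W₁ ∩ W₂ = {A, B}) (hFs : Sparse k l ⟨W₁, F⟩)
    (hM : IsGreatest (spanExcesses k W₁ F A B) (M - 2 * k)) :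
    Sparse k l ⟨W₁ ∪ W₂, F + O⟩ ↔ Sparse k l ⟨W₂, Multiset.replicate M s(A, B) + O⟩ :=
  ⟨Sparse.replicate_add hAB hW hM.1, Sparse.of_replicate_add hk hkl hl hF hO hAB hW hFs hM.2⟩

theorem maxSparseCard_union_add (hk : 0 ≤ k) (hkl : k ≤ l) (hl : l ≤ 2 * k) {W₁ W₂ : Finset V}
    {E₁ E₂ : Multiset (Sym2 V)} {A B : V} (h₁ : WF ⟨W₁, E₁⟩) (h₂ : WF ⟨W₂, E₂⟩) (hAB : A ≠ B)
    (hW : W₁ ∩ W₂ = {A, B}) :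
    maxSparseCard k l ⟨W₁ ∪ W₂, E₁ + E₂⟩ + (MAB k l ⟨W₁, E₁⟩ A B).toNat =
      maxSparseCard k l
          ⟨W₂, E₂ + Multiset.replicate (MAB k l ⟨W₁, E₁⟩ A B).toNat s(A, B)⟩ +
        maxSparseCard k l ⟨W₁, E₁⟩ := by
  have hA : A ∈ W₁ := Finset.inter_subset_left (hW ▸ Finset.mem_insert_self A {B})
  have hB : B ∈ W₁ :=
    Finset.inter_subset_left (hW ▸ Finset.mem_insert_of_mem (Finset.mem_singleton_self B))
  obtain ⟨F, hF, hr⟩ := exists_isBasis_isGreatest_rAB hk hl h₁ hA hB hAB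
  have hM : rAB k l ⟨W₁, E₁⟩ A B = (MAB k l ⟨W₁, E₁⟩ A B).toNat - 2 * k :=
    eq_sub_of_add_eq (toNat_MAB hk hl hA hB hAB).symm
  rw [hM] at hr
  set M := (MAB k l ⟨W₁, E₁⟩ A B).toNat
  set P := Multiset.replicate M s(A, B)
  have hglue (O) (hO : O ≤ E₂) : Sparse k l ⟨W₁ ∪ W₂, F + O⟩ ↔ Sparse k l ⟨W₂, P + O⟩ :=
    sparse_add_iff_sparse_replicate_add hk hkl hl (h₁.mono_s8 hF.prop.1) (h₂.mono_s8 hO) hAB hW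
      hF.prop.2 hr
  have hF0 : Sparse k l ⟨W₁ ∪ W₂, F + 0⟩ := by
    simpa using (h₁.mono_s8 hF.prop.1).sparse_of_sparse hF.prop.2 hk hl (W₁ ∪ W₂)
  have hP0 : Sparse k l ⟨W₂, P⟩ := by simpa using (hglue 0 (Multiset.zero_le E₂)).1 hF0
  obtain ⟨O, -, hO⟩ :=
    exists_le_maximal_of_le (p := fun O => Sparse k l ⟨W₁ ∪ W₂, F + O⟩) (Multiset.zero_le E₂) hF0
  have hO' : Maximal (fun O => O ≤ E₂ ∧ Sparse k l ⟨W₂, P + O⟩) O := by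
    simpa only [and_congr_right (hglue _)] using hO
  have hG : IsBasis k l ⟨W₁ ∪ W₂, E₁ + E₂⟩ (F + O) :=
    (hF.of_verts_subset h₁ hk hl Finset.subset_union_left).add hO
  have hR : IsBasis k l ⟨W₂, P + E₂⟩ (P + O) := hP0.isBasis.add hO'
  have hP : ∀ e ∈ P, ¬ e.IsDiag := fun e he => Multiset.eq_of_mem_replicate he ▸ hAB
  rw [add_comm E₂, hF.maxSparseCard_eq h₁.1,
    hG.maxSparseCard_eq fun e he => (Multiset.mem_add.1 he).elim (h₁.1 e) (h₂.1 e),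
    hR.maxSparseCard_eq fun e he => (Multiset.mem_add.1 he).elim (hP e) (h₂.1 e),
    Multiset.card_add, Multiset.card_add, Multiset.card_replicate]
  ring

theorem nred_union_add (hk : 0 ≤ k) (hkl : k ≤ l) (hl : l ≤ 2 * k) {W₁ W₂ : Finset V}
    {E₁ E₂ : Multiset (Sym2 V)} {A B : V} (h₁ : WF ⟨W₁, E₁⟩) (h₂ : WF ⟨W₂, E₂⟩) (hAB : A ≠ B)
    (hW : W₁ ∩ W₂ = {A, B}) :
    nred k l ⟨W₁ ∪ W₂, E₁ + E₂⟩ =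
      nred k l ⟨W₂, E₂ + Multiset.replicate (MAB k l ⟨W₁, E₁⟩ A B).toNat s(A, B)⟩ +
        nred k l ⟨W₁, E₁⟩ := by
  have hrank := maxSparseCard_union_add hk hkl hl h₁ h₂ hAB hW
  have hG := nred_add_maxSparseCard k l ⟨W₁ ∪ W₂, E₁ + E₂⟩
  have hR := nred_add_maxSparseCard k l
    ⟨W₂, E₂ + Multiset.replicate (MAB k l ⟨W₁, E₁⟩ A B).toNat s(A, B)⟩
  have hH := nred_add_maxSparseCard k l ⟨W₁, E₁⟩
  simp only [Multiset.card_add, Multiset.card_replicate] at hG hR hH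
  omega

lemma RenormCond.mem_sym2_of_notMem {G : MG V} {VH : Finset V} {A B : V}
    (hren : RenormCond G VH A B) (hG : G.WF) (hA : A ∈ VH) (hB : B ∈ VH) {e : Sym2 V}
    (he : e ∈ G.edges) (heH : e ∉ VH.sym2) : e ∈ (G.verts \ VH ∪ {A, B}).sym2 := by
  refine Finset.mem_sym2_iff.2 fun v hv => ?_
  by_cases hvH : v ∈ VH
  · obtain ⟨w, hw, hwH⟩ : ∃ w ∈ e, w ∉ VH := by simpa [Finset.mem_sym2_iff] using heH
    obtain rfl : e = s(v, w) :=
      (Sym2.mem_and_mem_iff (ne_of_mem_of_not_mem hvH hwH)).1 ⟨hv, hw⟩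
    have hAw : A ≠ w := ne_of_mem_of_not_mem hA hwH
    have hBw : B ≠ w := ne_of_mem_of_not_mem hB hwH
    have hvAB : A = v ∨ B = v := by
      simpa [hAw, hBw] using hren _ he ⟨v, hv, hvH⟩ ⟨w, hw, hwH⟩
    exact Finset.mem_union_right _ (by simpa [eq_comm] using hvAB)
  · exact Finset.mem_union_left _ <|
      Finset.mem_sdiff.2 ⟨Finset.mem_sym2_iff.1 (hG.2 e he) v hv, hvH⟩

end Gluing

end MG

/-- Proposition 3.2 (ii): let `H`, the subgraph of `G` induced by `VH`,
satisfy the renormalizability condition w.r.t. `A, B`. Then the numbers of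
`(k,l)`-redundant edges satisfy `n_red(G) = n_red(R(G)) + n_red(H)`. -/
theorem nred_renorm {V : Type*} [DecidableEq V] (k l : ℤ)
    (hk : 1 ≤ k) (hkl : k ≤ l) (hl2k : l < 2 * k)
    (G : MG V) (hWF : G.WF) (VH : Finset V) (hVH : VH ⊆ G.verts)
    (A B : V) (hA : A ∈ VH) (hB : B ∈ VH) (hAB : A ≠ B)
    (hren : MG.RenormCond G VH A B) :
    MG.nred k l G =
      MG.nred k l (MG.renormG k l G VH A B) + MG.nred k l (G.induced VH) := by
  have hpair : {A, B} ⊆ VH := Finset.insert_subset hA (Finset.singleton_subset_iff.2 hB)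
  have hinter : VH ∩ (G.verts \ VH ∪ {A, B}) = {A, B} := by
    rw [Finset.inter_union_distrib_left, Finset.inter_sdiff_self, Finset.empty_union,
      Finset.inter_eq_right.2 hpair]
  have hunion : VH ∪ (G.verts \ VH ∪ {A, B}) = G.verts := by
    rw [← Finset.union_assoc, Finset.union_sdiff_of_subset hVH,
      Finset.union_eq_left.2 (hpair.trans hVH)]
  have hin : MG.WF ⟨VH, G.edges.filter (· ∈ VH.sym2)⟩ :=
    ⟨fun e he => hWF.1 e (Multiset.mem_of_mem_filter he), fun e he => Multiset.of_mem_filter he⟩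
  have hout : MG.WF ⟨G.verts \ VH ∪ {A, B}, G.edges.filter (· ∉ VH.sym2)⟩ :=
    ⟨fun e he => hWF.1 e (Multiset.mem_of_mem_filter he), fun e he =>
      hren.mem_sym2_of_notMem hWF hA hB (Multiset.mem_of_mem_filter he)
        (Multiset.mem_filter.1 he).2⟩
  have hsplit := MG.nred_union_add (by linarith) hkl hl2k.le hin hout hAB hinter
  rwa [hunion, Multiset.filter_add_not] at hsplit
end
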